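/- Let G be a finite group such that every nontrivial complex irreducible representation of G has dimension at least D. Then for all functions f₁, f₂, f₃ : G → 𝔻 one has (1/|G|) Σ_{g∈G} | (1/|G|) Σ_{x∈G} f₁(x) f₂(gx) f₃(xg) − ((1/|G|) Σ_{x∈G} f₁(x)) · ((1/|G|) Σ_{x∈G} Ef₂(x) · Ef₃(x)) | ≤ 4 · D^{-1/8}, where for f : G → ℂ, Ef(x) denotes the average of f over the conjugacy class of x in G. -/

import Mathlib

/-- A finite group `G` is `D`-quasi-random if every nontrivial complex irreducible
representation of `G` has dimension at least `D`. -/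
def IsQuasiRandomFin (G : Type*) [Group G] (D : ℕ) : Prop :=
  ∀ (V : Type) [AddCommGroup V] [Module ℂ V] [FiniteDimensional ℂ V]
    (ρ : Representation ℂ G V),
    IsSimpleModule (MonoidAlgebra ℂ G) ρ.asModule →
    (∃ (g : G) (v : V), ρ g v ≠ v) →
    D ≤ Module.finrank ℂ V

/-- `classAvg f x` is the average of `f` over the conjugacy class of `x` in `G`; this is the
conditional expectation of `f` onto the algebra of conjugation-invariant functions with
respect to the uniform probability measure on `G`. -/
noncomputable def classAvg {G : Type*} [Group G] [Fintype G] (f : G → ℂ) (x : G) : ℂ :=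
  letI := Classical.decPred fun y : G => IsConj x y
  ((Finset.univ.filter fun y : G => IsConj x y).card : ℂ)⁻¹ *
    ∑ y ∈ Finset.univ.filter fun y : G => IsConj x y, f y


theorem qr_dim_aux {G : Type*} [Group G] {D : ℕ} (hQR : IsQuasiRandomFin G D) (n : ℕ) :
    ∀ (V : Type) [AddCommGroup V] [Module ℂ V] [FiniteDimensional ℂ V]
    (ρ : Representation ℂ G V), Nontrivial V → (∀ v, (∀ g, ρ g v = v) → v = 0) →
    Module.finrank ℂ V = n → D ≤ n := by
  induction n using Nat.strong_induction_on with
  | _ n ih =>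
  intro V _ _ _ ρ hn hfix hdim
  by_cases hirr : Representation.IsIrreducible ρ
  · rw [← hdim]
    refine hQR V ρ ((Representation.irreducible_iff_isSimpleModule_asModule ρ).1 hirr) ?_
    by_contra! h
    obtain ⟨v, hv⟩ := exists_ne (0 : V)
    exact hv (hfix v fun g => h g v)
  · have hex : ∃ σ : Subrepresentation ρ, σ.toSubmodule ≠ ⊥ ∧ σ.toSubmodule ≠ ⊤ := by
      by_contra! h
      apply hirr
      have hnt : Nontrivial (Subrepresentation ρ) := by
        refine ⟨⊥, ⊤, fun h => ?_⟩
        have h2 : (⊥ : Submodule ℂ V) = ⊤ := congrArg Subrepresentation.toSubmodule h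
        exact bot_ne_top h2
      refine ⟨fun σ => ?_⟩
      by_cases hs : σ.toSubmodule = ⊥
      · left; exact Subrepresentation.toSubmodule_injective hs
      · right; exact Subrepresentation.toSubmodule_injective (h σ hs)
    obtain ⟨σ, h1, h2⟩ := hex
    have hlt : Module.finrank ℂ σ.toSubmodule < n := by
      rw [← hdim]; exact Submodule.finrank_lt h2
    refine le_trans (ih _ hlt σ.toSubmodule σ.toRepresentation
      ((Submodule.nontrivial_iff_ne_bot).2 h1) ?_ rfl) hlt.le
    intro v hv
    apply Subtype.ext
    apply hfix
    intro g
    exact congrArg Subtype.val (hv g)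

theorem qr_dim {G : Type*} [Group G] {D : ℕ} (hQR : IsQuasiRandomFin G D)
    (V : Type*) [AddCommGroup V] [Module ℂ V] [FiniteDimensional ℂ V]
    (ρ : Representation ℂ G V) (hn : Nontrivial V) (hfix : ∀ v, (∀ g, ρ g v = v) → v = 0) :
    D ≤ Module.finrank ℂ V := by
  let e : V ≃ₗ[ℂ] (Fin (Module.finrank ℂ V) → ℂ) := (Module.finBasis ℂ V).equivFun
  let ρ' : Representation ℂ G (Fin (Module.finrank ℂ V) → ℂ) :=
    { toFun := fun g => e.toLinearMap ∘ₗ ρ g ∘ₗ e.symm.toLinearMap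
      map_one' := by ext; simp
      map_mul' := by intro a b; ext; simp }
  refine qr_dim_aux hQR _ _ ρ' e.symm.toEquiv.nontrivial ?_ (by simp)
  intro v hv
  have := hfix (e.symm v) (fun g => by
    have := hv g
    apply e.injective
    simpa [ρ'] using this)
  simpa using this

/-- Bounded multiplicity estimate. -/
theorem qr_mixing_aux {G : Type*} [Group G] [Fintype G] {D : ℕ} (hQR : IsQuasiRandomFin G D)
    {E : Type*} [NormedAddCommGroup E] [InnerProductSpace ℂ E] [FiniteDimensional ℂ E]
    (ρ : Representation ℂ G E) (hρ : ∀ g x y, inner ℂ (ρ g x) (ρ g y) = inner ℂ x y)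
    (v : E) (hv : ∀ w, (∀ g, ρ g w = w) → inner ℂ v w = 0) (u : E) :
    D * ∑ g : G, ‖inner ℂ v (ρ g u)‖ ^ 2 ≤ Fintype.card G * ‖v‖ ^ 2 * ‖u‖ ^ 2 := by
  classical
  have hinv : ∀ g x, ρ g (ρ g⁻¹ x) = x := fun g x => by
    rw [← Module.End.mul_apply, ← map_mul]; simp
  have hadj : ∀ g x y, inner ℂ (ρ g⁻¹ x) y = inner ℂ x (ρ g y) := fun g x y => by
    rw [← hρ g, hinv]
  let A : E →ₗ[ℂ] E := ∑ g : G,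
    ((innerₛₗ ℂ v) ∘ₗ (ρ g)).smulRight (ρ g⁻¹ v)
  have hA : ∀ x, A x = ∑ g : G, inner ℂ v (ρ g x) • ρ g⁻¹ v := fun x => by
    simp [A]
  have hAi : ∀ x y, inner ℂ (A x) y = ∑ g : G, inner ℂ (ρ g x) v * inner ℂ v (ρ g y) := by
    intro x y
    rw [hA, sum_inner]
    refine Finset.sum_congr rfl fun g _ => ?_
    rw [inner_smul_left, hadj, inner_conj_symm]
  have hAs : A.IsSymmetric := by
    intro x y
    rw [hAi, ← inner_conj_symm, hAi, map_sum]
    refine Finset.sum_congr rfl fun g _ => ?_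
    rw [map_mul, inner_conj_symm, inner_conj_symm, mul_comm]
  have hAself : ∀ x, inner ℂ (A x) x = ((∑ g : G, ‖inner ℂ v (ρ g x)‖ ^ 2 : ℝ) : ℂ) := by
    intro x
    rw [hAi]
    push_cast
    refine Finset.sum_congr rfl fun g _ => ?_
    rw [← inner_conj_symm, Complex.conj_mul']
  have hAcomm : ∀ h x, A (ρ h x) = ρ h (A x) := by
    intro h x
    rw [hA, hA, map_sum]
    refine Fintype.sum_equiv (Equiv.mulRight h) _ _ fun g => ?_
    rw [map_smul, Equiv.coe_mulRight, map_mul, Module.End.mul_apply, ← Module.End.mul_apply (ρ h),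
      ← map_mul]
    simp
  -- eigenvalue bound
  have hev : ∀ l : ℝ, Module.End.HasEigenvalue A (l : ℂ) →
      D * l ≤ Fintype.card G * ‖v‖ ^ 2 := by
    intro l hl
    by_cases hl0 : l ≤ 0
    · have : (D : ℝ) * l ≤ 0 := mul_nonpos_of_nonneg_of_nonpos (Nat.cast_nonneg _) hl0
      exact this.trans (by positivity)
    push Not at hl0
    let W := Module.End.eigenspace A (l : ℂ)
    have hWA : ∀ w ∈ W, A w = (l : ℂ) • w := fun w hw => Module.End.mem_eigenspace_iff.1 hw
    let σ : Subrepresentation ρ :=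
      { toSubmodule := W
        apply_mem_toSubmodule := by
          intro g w hw
          rw [Module.End.mem_eigenspace_iff, hAcomm, hWA w hw, map_smul] }
    have hdim : D ≤ Module.finrank ℂ W := by
      refine qr_dim hQR _ σ.toRepresentation ((Submodule.nontrivial_iff_ne_bot).2 hl) ?_
      rintro ⟨w, hw⟩ hfix
      have hfix' : ∀ g, ρ g w = w := fun g => congrArg Subtype.val (hfix g)
      have h0 : (l : ℂ) • w = 0 := by
        rw [← hWA w hw, hA]
        refine Finset.sum_eq_zero fun g _ => ?_
        rw [hfix', hv w hfix', zero_smul]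
      rcases smul_eq_zero.1 h0 with h | h
      · exact absurd (by exact_mod_cast h) hl0.ne'
      · exact Subtype.ext h
    let b := stdOrthonormalBasis ℂ W
    have hb : ∀ g : G, ∑ i, ‖inner ℂ v (ρ g (b i : E))‖ ^ 2 ≤ ‖v‖ ^ 2 := by
      intro g
      have ho : Orthonormal ℂ (fun i => ρ g (b i : E)) := by
        rw [orthonormal_iff_ite]
        intro i j
        rw [hρ]
        exact (orthonormal_iff_ite.1 b.orthonormal) i j
      refine le_trans (le_of_eq ?_) (ho.sum_inner_products_le (x := v) (s := Finset.univ))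
      refine Finset.sum_congr rfl fun i _ => ?_
      rw [norm_inner_symm]
    have hl1 : ∀ i, ∑ g : G, ‖inner ℂ v (ρ g (b i : E))‖ ^ 2 = l := by
      intro i
      have h1 := hAself (b i)
      rw [hWA _ (b i).2, inner_smul_left, inner_self_eq_norm_sq_to_K] at h1
      have h2 : ‖(b i : E)‖ = 1 := b.orthonormal.1 i
      rw [h2] at h1
      simp only [Complex.conj_ofReal] at h1
      have h3 : ((∑ g : G, ‖inner ℂ v (ρ g (b i : E))‖ ^ 2 : ℝ) : ℂ) = (l : ℂ) := by
        rw [← h1]; simp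
      exact_mod_cast h3
    calc (D : ℝ) * l ≤ (Module.finrank ℂ W : ℝ) * l := by gcongr
      _ = ∑ i : Fin (Module.finrank ℂ W), ∑ g : G, ‖inner ℂ v (ρ g (b i : E))‖ ^ 2 := by
        simp [hl1]
      _ = ∑ g : G, ∑ i : Fin (Module.finrank ℂ W), ‖inner ℂ v (ρ g (b i : E))‖ ^ 2 :=
        Finset.sum_comm
      _ ≤ ∑ g : G, ‖v‖ ^ 2 := Finset.sum_le_sum fun g _ => hb g
      _ = _ := by simp
  -- spectral decomposition
  let e := hAs.eigenvectorBasis rfl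
  have hlam : ∑ g : G, ‖inner ℂ v (ρ g u)‖ ^ 2
      = ∑ i, hAs.eigenvalues rfl i * ‖inner ℂ (e i) u‖ ^ 2 := by
    have h1 := hAself u
    rw [← OrthonormalBasis.sum_inner_mul_inner e] at h1
    have h2 : ((∑ i, hAs.eigenvalues rfl i * ‖inner ℂ (e i) u‖ ^ 2 : ℝ) : ℂ)
        = ∑ i, inner ℂ (A u) (e i) * inner ℂ (e i) u := by
      push_cast
      refine Finset.sum_congr rfl fun i _ => ?_
      rw [hAs, hAs.apply_eigenvectorBasis rfl i, inner_smul_right, mul_assoc,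
        ← inner_conj_symm u (e i), Complex.conj_mul']
      rfl
    rw [← h2] at h1
    exact_mod_cast h1.symm
  rw [hlam, Finset.mul_sum]
  calc ∑ i, (D : ℝ) * (hAs.eigenvalues rfl i * ‖inner ℂ (e i) u‖ ^ 2)
      ≤ ∑ i, (Fintype.card G * ‖v‖ ^ 2) * ‖inner ℂ (e i) u‖ ^ 2 := by
        refine Finset.sum_le_sum fun i _ => ?_
        rw [← mul_assoc]
        exact mul_le_mul_of_nonneg_right (hev _ (hAs.hasEigenvalue_eigenvalues rfl i))
          (by positivity)
    _ = _ := by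
      rw [← Finset.mul_sum, e.sum_sq_norm_inner_right]

theorem qr_mixing {G : Type*} [Group G] [Fintype G] {D : ℕ} (hQR : IsQuasiRandomFin G D)
    {E : Type*} [NormedAddCommGroup E] [InnerProductSpace ℂ E] [FiniteDimensional ℂ E]
    (ρ : Representation ℂ G E) (hρ : ∀ g x y, inner ℂ (ρ g x) (ρ g y) = inner ℂ x y)
    (v u : E) :
    D * ∑ g : G, ‖inner ℂ v (ρ g u) - (Fintype.card G : ℂ)⁻¹ * ∑ h : G, inner ℂ v (ρ h u)‖ ^ 2
      ≤ Fintype.card G * ‖v‖ ^ 2 * ‖u‖ ^ 2 := by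
  have hN : (Fintype.card G : ℂ) ≠ 0 := by simp
  let p : E := (Fintype.card G : ℂ)⁻¹ • ∑ h : G, ρ h v
  have hp : ∀ g, ρ g p = p := by
    intro g
    simp only [p, map_smul, map_sum]
    congr 1
    refine Fintype.sum_equiv (Equiv.mulLeft g) _ _ fun h => ?_
    simp
  have hpi : ∀ w, inner ℂ p w = (Fintype.card G : ℂ)⁻¹ * ∑ h : G, inner ℂ v (ρ h w) := by
    intro w
    simp only [p, inner_smul_left, sum_inner, map_inv₀, map_natCast]
    congr 1
    refine Fintype.sum_equiv (Equiv.inv G) _ _ fun h => ?_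
    rw [← hρ h⁻¹, ← Module.End.mul_apply, ← map_mul]
    simp
  have hfix : ∀ w, (∀ g, ρ g w = w) → inner ℂ (v - p) w = 0 := by
    intro w hw
    rw [inner_sub_left, hpi]
    simp [hw]
  have hnorm : ‖v - p‖ ^ 2 ≤ ‖v‖ ^ 2 := by
    have := norm_add_sq_eq_norm_sq_add_norm_sq_of_inner_eq_zero (v - p) p (hfix p hp)
    rw [sub_add_cancel] at this
    nlinarith [mul_self_nonneg ‖p‖]
  have key := qr_mixing_aux hQR ρ hρ (v - p) hfix u
  have hterm : ∀ g, inner ℂ (v - p) (ρ g u)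
      = inner ℂ v (ρ g u) - (Fintype.card G : ℂ)⁻¹ * ∑ h : G, inner ℂ v (ρ h u) := by
    intro g
    rw [inner_sub_left]
    congr 1
    rw [← hpi, ← hρ g p u, hp]
  simp only [hterm] at key
  refine key.trans ?_
  gcongr

theorem qr_perm {G : Type*} [Group G] [Fintype G] {D : ℕ} (hD : 0 < D)
    (hQR : IsQuasiRandomFin G D)
    (σ : G →* Equiv.Perm G) (u v : G → ℂ) (a b : ℝ) (ha : 0 ≤ a) (hb : 0 ≤ b)
    (hu : ∀ x, ‖u x‖ ≤ a) (hv : ∀ x, ‖v x‖ ≤ b) :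
    (Fintype.card G : ℝ)⁻¹ * ∑ g : G, ‖(Fintype.card G : ℂ)⁻¹ * ∑ x, u (σ g x) * v x
        - (Fintype.card G : ℂ)⁻¹ * ∑ h : G, (Fintype.card G : ℂ)⁻¹ * ∑ x, u (σ h x) * v x‖
      ≤ a * b / √D := by
  classical
  set N : ℝ := ((Fintype.card G : ℕ) : ℝ) with hNdef
  have hN : 0 < N := by simp [hNdef, Fintype.card_pos]
  let ρ : Representation ℂ G (EuclideanSpace ℂ G) :=
    { toFun := fun g =>
        { toFun := fun w => WithLp.toLp 2 (fun x => w (σ g⁻¹ x))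
          map_add' := by intro x y; ext; simp
          map_smul' := by intro c x; ext; simp }
      map_one' := by ext; simp
      map_mul' := by intro g h; ext; simp }
  have hρa : ∀ g w x, (ρ g w) x = w (σ g⁻¹ x) := fun g w x => rfl
  have hρ : ∀ g x y, inner ℂ (ρ g x) (ρ g y) = inner ℂ x y := by
    intro g x y
    simp only [PiLp.inner_apply, hρa]
    exact Fintype.sum_equiv (σ g⁻¹) _ _ fun z => rfl
  have key := qr_mixing hQR ρ hρ (WithLp.toLp 2 (fun x => (starRingEnd ℂ) (v x)))
    (WithLp.toLp 2 u)
  have hin : ∀ g, inner ℂ (WithLp.toLp 2 (fun x => (starRingEnd ℂ) (v x)) : EuclideanSpace ℂ G)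
      (ρ g (WithLp.toLp 2 u)) = ∑ x, u (σ g⁻¹ x) * v x := by
    intro g
    simp [PiLp.inner_apply, hρa]
  simp only [hin] at key
  set φ : G → ℂ := fun g => ∑ x, u (σ g x) * v x with hφ
  have h1 : ∑ h : G, ∑ x, u (σ h⁻¹ x) * v x = ∑ h, φ h :=
    Fintype.sum_equiv (Equiv.inv G) _ _ fun h => rfl
  rw [h1] at key
  have h2 : ∑ g : G, ‖∑ x, u (σ g⁻¹ x) * v x - (Fintype.card G : ℂ)⁻¹ * ∑ h, φ h‖ ^ 2
      = ∑ g, ‖φ g - (Fintype.card G : ℂ)⁻¹ * ∑ h, φ h‖ ^ 2 :=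
    Fintype.sum_equiv (Equiv.inv G) _ _ fun h => rfl
  rw [h2] at key
  have hnu : ‖(WithLp.toLp 2 u : EuclideanSpace ℂ G)‖ ^ 2 ≤ N * a ^ 2 := by
    rw [EuclideanSpace.norm_sq_eq]
    calc ∑ x, ‖u x‖ ^ 2 ≤ ∑ x : G, a ^ 2 := Finset.sum_le_sum fun x _ => by gcongr; exact hu x
      _ = _ := by simp [hNdef]
  have hnv : ‖(WithLp.toLp 2 (fun x => (starRingEnd ℂ) (v x)) : EuclideanSpace ℂ G)‖ ^ 2
      ≤ N * b ^ 2 := by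
    rw [EuclideanSpace.norm_sq_eq]
    calc ∑ x, ‖(starRingEnd ℂ) (v x)‖ ^ 2 ≤ ∑ x : G, b ^ 2 :=
          Finset.sum_le_sum fun x _ => by gcongr; simpa using hv x
      _ = _ := by simp [hNdef]
  set ψ : G → ℝ := fun g => ‖φ g - (Fintype.card G : ℂ)⁻¹ * ∑ h, φ h‖ with hψ
  have hD' : (0 : ℝ) < D := by exact_mod_cast hD
  have key2 : D * ∑ g, ψ g ^ 2 ≤ N * (N * b ^ 2) * (N * a ^ 2) := by
    refine key.trans ?_
    gcongr
  have hcs : (∑ g, ψ g) ^ 2 ≤ N * ∑ g, ψ g ^ 2 := by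
    have := sq_sum_le_card_mul_sum_sq (s := (Finset.univ : Finset G)) (f := ψ)
    simpa [hNdef] using this
  have hψs : ∑ g, ψ g ≤ N ^ 2 * (a * b / √D) := by
    refine abs_le_of_sq_le_sq' ?_ (by positivity) |>.2
    have e : (N ^ 2 * (a * b / √D)) ^ 2 = (N * (N * (N * b ^ 2) * (N * a ^ 2))) / D := by
      rw [mul_pow, div_pow, Real.sq_sqrt hD'.le]; ring
    rw [e, le_div_iff₀ hD']
    nlinarith [mul_le_mul_of_nonneg_left key2 hN.le, mul_le_mul_of_nonneg_right hcs hD'.le]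
  have hLHS : ∀ g, ‖(Fintype.card G : ℂ)⁻¹ * ∑ x, u (σ g x) * v x
        - (Fintype.card G : ℂ)⁻¹ * ∑ h : G, (Fintype.card G : ℂ)⁻¹ * ∑ x, u (σ h x) * v x‖
      = N⁻¹ * ψ g := by
    intro g
    rw [← Finset.mul_sum, ← mul_sub, norm_mul]
    simp [hψ, hφ, hNdef]
  simp only [hLHS]
  rw [← Finset.mul_sum]
  calc N⁻¹ * (N⁻¹ * ∑ g, ψ g) ≤ N⁻¹ * (N⁻¹ * (N ^ 2 * (a * b / √D))) := by gcongr
    _ = _ := by field_simp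

theorem classAvg_eq {G : Type*} [Group G] [Fintype G] (f : G → ℂ) (x : G) :
    classAvg f x = (Fintype.card G : ℂ)⁻¹ * ∑ g : G, f (g * x * g⁻¹) := by
  classical
  have hN : (Fintype.card G : ℂ) ≠ 0 := by simp
  set C := Finset.univ.filter fun y : G => IsConj x y with hC
  have hcl : classAvg f x = (C.card : ℂ)⁻¹ * ∑ y ∈ C, f y := by
    unfold classAvg
    simp only [hC]
    congr!
  set c := (Finset.univ.filter fun g : G => g * x * g⁻¹ = x).card with hc
  have hfib : ∀ y ∈ C, (Finset.univ.filter fun g : G => g * x * g⁻¹ = y).card = c := by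
    intro y hy
    obtain ⟨g0, hg0⟩ := isConj_iff.1 (Finset.mem_filter.1 hy).2
    refine Finset.card_equiv (Equiv.mulLeft g0⁻¹) fun g => ?_
    simp only [Finset.mem_filter, Finset.mem_univ, true_and, Equiv.coe_mulLeft, ← hg0]
    constructor
    · intro h
      calc g0⁻¹ * g * x * (g0⁻¹ * g)⁻¹ = g0⁻¹ * (g * x * g⁻¹) * g0 := by group
        _ = x := by rw [h]; group
    · intro h
      calc g * x * g⁻¹ = g0 * (g0⁻¹ * g * x * (g0⁻¹ * g)⁻¹) * g0⁻¹ := by group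
        _ = _ := by rw [h]
  have hmap : ∀ g ∈ (Finset.univ : Finset G), g * x * g⁻¹ ∈ C := fun g _ => by
    simp only [hC, Finset.mem_filter, Finset.mem_univ, true_and]
    exact isConj_iff.2 ⟨g, rfl⟩
  have hsum : ∀ F : G → ℂ, ∑ g : G, F (g * x * g⁻¹) = c * ∑ y ∈ C, F y := by
    intro F
    rw [← Finset.sum_fiberwise_of_maps_to hmap, Finset.mul_sum]
    refine Finset.sum_congr rfl fun y hy => ?_
    rw [← hfib y hy, ← nsmul_eq_mul, ← Finset.sum_const]
    refine Finset.sum_congr rfl fun g hg => ?_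
    rw [(Finset.mem_filter.1 hg).2]
  have hcard : (Fintype.card G : ℂ) = c * C.card := by
    have := hsum (fun _ => 1)
    simpa using this
  have hc0 : (c : ℂ) ≠ 0 := fun h => hN (by rw [hcard, h, zero_mul])
  have hC0 : (C.card : ℂ) ≠ 0 := fun h => hN (by rw [hcard, h, mul_zero])
  rw [hcl, hsum, hcard]
  field_simp

theorem classAvg_conj {G : Type*} [Group G] [Fintype G] (f : G → ℂ) (x h : G) :
    classAvg f (h * x * h⁻¹) = classAvg f x := by
  rw [classAvg_eq, classAvg_eq]
  congr 1
  refine Fintype.sum_equiv (Equiv.mulRight h) _ _ fun g => ?_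
  simp [mul_assoc]

theorem classAvg_pair {G : Type*} [Group G] [Fintype G] (f f' : G → ℂ) :
    (Fintype.card G : ℂ)⁻¹ * ∑ h : G, (Fintype.card G : ℂ)⁻¹ * ∑ x, f (h * x * h⁻¹) * f' x
      = (Fintype.card G : ℂ)⁻¹ * ∑ x, classAvg f x * classAvg f' x := by
  have hN : (Fintype.card G : ℂ) ≠ 0 := by simp
  have h1 : ∑ h : G, (Fintype.card G : ℂ)⁻¹ * ∑ x, f (h * x * h⁻¹) * f' x
      = ∑ x, classAvg f x * f' x := by
    simp only [classAvg_eq, Finset.mul_sum, Finset.sum_mul]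
    rw [Finset.sum_comm]
    simp only [mul_assoc]
  have h2 : ∑ x, classAvg f x * classAvg f' x = ∑ x, classAvg f x * f' x := by
    have : ∀ x, classAvg f x * classAvg f' x
        = (Fintype.card G : ℂ)⁻¹ * ∑ h : G, classAvg f (h * x * h⁻¹) * f' (h * x * h⁻¹) := by
      intro x
      simp only [classAvg_conj]
      rw [← Finset.mul_sum, classAvg_eq f' x]
      ring
    simp only [this]
    rw [← Finset.mul_sum, Finset.sum_comm]
    have h3 : ∀ h : G, ∑ x, classAvg f (h * x * h⁻¹) * f' (h * x * h⁻¹)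
        = ∑ x, classAvg f x * f' x := fun h =>
      Fintype.sum_equiv (MulAut.conj h).toEquiv _ _ fun x => by simp
    simp only [h3]
    simp
  rw [h1, h2]

theorem vdc_ineq {G : Type*} [Fintype G] (v : G → G → ℂ) (f : G → ℂ)
    (hf : ∀ x, ‖f x‖ ≤ 1) :
    (∑ g, ‖∑ y, v g y * f y‖) ^ 2
      ≤ Fintype.card G * ∑ g, ∑ h, ‖∑ y, v g y * (starRingEnd ℂ) (v h y)‖ := by
  have hc : ∀ z : ℂ, ∃ c : ℂ, ‖c‖ ≤ 1 ∧ c * z = (‖z‖ : ℂ) := by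
    intro z
    by_cases hz : z = 0
    · exact ⟨0, by simp, by simp [hz]⟩
    · have : (‖z‖ : ℂ) ≠ 0 := by simpa using hz
      refine ⟨‖z‖ / z, ?_, by field_simp⟩
      rw [norm_div]
      simp [div_self (norm_ne_zero_iff.2 hz)]
  choose c hc1 hc2 using fun g => hc (∑ y, v g y * f y)
  have h1 : ((∑ g, ‖∑ y, v g y * f y‖ : ℝ) : ℂ) = ∑ y, (∑ g, c g * v g y) * f y := by
    push_cast
    simp only [← hc2, Finset.mul_sum, Finset.sum_mul]
    rw [Finset.sum_comm]
    simp only [mul_assoc]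
  have h2 : ∑ g, ‖∑ y, v g y * f y‖ ≤ ∑ y, ‖∑ g, c g * v g y‖ := by
    have h0 : (0 : ℝ) ≤ ∑ g, ‖∑ y, v g y * f y‖ := by positivity
    calc ∑ g, ‖∑ y, v g y * f y‖ = ‖((∑ g, ‖∑ y, v g y * f y‖ : ℝ) : ℂ)‖ := by
          rw [Complex.norm_real, Real.norm_of_nonneg h0]
      _ ≤ ∑ y, ‖(∑ g, c g * v g y) * f y‖ := by rw [h1]; exact norm_sum_le _ _
      _ ≤ _ := by
        refine Finset.sum_le_sum fun y _ => ?_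
        rw [norm_mul]
        exact mul_le_of_le_one_right (norm_nonneg _) (hf y)
  have h3 : (∑ y, ‖∑ g, c g * v g y‖) ^ 2 ≤ Fintype.card G * ∑ y, ‖∑ g, c g * v g y‖ ^ 2 := by
    simpa using sq_sum_le_card_mul_sum_sq (s := (Finset.univ : Finset G))
      (f := fun y => ‖∑ g, c g * v g y‖)
  have h4 : ((∑ y, ‖∑ g, c g * v g y‖ ^ 2 : ℝ) : ℂ)
      = ∑ g, ∑ h, (c g * (starRingEnd ℂ) (c h)) * ∑ y, v g y * (starRingEnd ℂ) (v h y) := by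
    push_cast
    simp only [← Complex.mul_conj', map_sum, Finset.sum_mul_sum, map_mul]
    rw [Finset.sum_comm]
    refine Finset.sum_congr rfl fun g _ => ?_
    rw [Finset.sum_comm]
    refine Finset.sum_congr rfl fun h _ => ?_
    rw [Finset.mul_sum]
    refine Finset.sum_congr rfl fun y _ => ?_
    ring
  have h5 : ∑ y, ‖∑ g, c g * v g y‖ ^ 2
      ≤ ∑ g, ∑ h, ‖∑ y, v g y * (starRingEnd ℂ) (v h y)‖ := by
    have h0 : (0 : ℝ) ≤ ∑ y, ‖∑ g, c g * v g y‖ ^ 2 := by positivity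
    rw [← Real.norm_of_nonneg h0, ← Complex.norm_real, h4]
    refine (norm_sum_le _ _).trans (Finset.sum_le_sum fun g _ => ?_)
    refine (norm_sum_le _ _).trans (Finset.sum_le_sum fun h _ => ?_)
    rw [norm_mul, norm_mul, RCLike.norm_conj]
    exact mul_le_of_le_one_left (norm_nonneg _)
      (mul_le_one₀ (hc1 g) (norm_nonneg _) (hc1 h))
  calc _ ≤ (∑ y, ‖∑ g, c g * v g y‖) ^ 2 := by gcongr
    _ ≤ _ := h3
    _ ≤ _ := by gcongr

theorem avg_norm_le {G : Type*} [Fintype G] [Nonempty G] (f : G → ℂ) (a : ℝ)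
    (hf : ∀ x, ‖f x‖ ≤ a) : ‖(Fintype.card G : ℂ)⁻¹ * ∑ x, f x‖ ≤ a := by
  have hN : (0 : ℝ) < Fintype.card G := by exact_mod_cast Fintype.card_pos
  rw [norm_mul, norm_inv, Complex.norm_natCast, inv_mul_le_iff₀ hN]
  calc ‖∑ x, f x‖ ≤ ∑ x : G, a := (norm_sum_le _ _).trans (Finset.sum_le_sum fun x _ => hf x)
    _ = _ := by simp

theorem qr_left {G : Type*} [Group G] [Fintype G] {D : ℕ} (hD : 0 < D)
    (hQR : IsQuasiRandomFin G D)
    (u v : G → ℂ) (a b : ℝ) (ha : 0 ≤ a) (hb : 0 ≤ b)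
    (hu : ∀ x, ‖u x‖ ≤ a) (hv : ∀ x, ‖v x‖ ≤ b) :
    (Fintype.card G : ℝ)⁻¹ * ∑ g : G, ‖(Fintype.card G : ℂ)⁻¹ * ∑ x, u (g * x) * v x
        - ((Fintype.card G : ℂ)⁻¹ * ∑ x, u x) * ((Fintype.card G : ℂ)⁻¹ * ∑ x, v x)‖
      ≤ a * b / √D := by
  have key := qr_perm hD hQR (MulAction.toPermHom G G) u v a b ha hb hu hv
  have h1 : (Fintype.card G : ℂ)⁻¹ * ∑ h : G, (Fintype.card G : ℂ)⁻¹ * ∑ x, u (h * x) * v x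
      = ((Fintype.card G : ℂ)⁻¹ * ∑ x, u x) * ((Fintype.card G : ℂ)⁻¹ * ∑ x, v x) := by
    rw [← Finset.mul_sum, Finset.sum_comm]
    have : ∀ x : G, ∑ h, u (h * x) * v x = (∑ y, u y) * v x := by
      intro x
      rw [← Finset.sum_mul]
      congr 1
      exact Fintype.sum_equiv (Equiv.mulRight x) _ _ fun h => rfl
    simp only [this, ← Finset.mul_sum]
    ring
  simp only [MulAction.toPermHom_apply, MulAction.toPerm_apply, smul_eq_mul, h1] at key
  exact key

theorem qr_conj {G : Type*} [Group G] [Fintype G] {D : ℕ} (hD : 0 < D)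
    (hQR : IsQuasiRandomFin G D)
    (u v : G → ℂ) (hu : ∀ x, ‖u x‖ ≤ 1) (hv : ∀ x, ‖v x‖ ≤ 1) :
    (Fintype.card G : ℝ)⁻¹ * ∑ g : G, ‖(Fintype.card G : ℂ)⁻¹ * ∑ x, u (g * x * g⁻¹) * v x
        - (Fintype.card G : ℂ)⁻¹ * ∑ x, classAvg u x * classAvg v x‖
      ≤ 1 / √D := by
  have key := qr_perm hD hQR ((MulAut.toPerm G).comp MulAut.conj) u v 1 1 zero_le_one
    zero_le_one hu hv
  have hap : ∀ g x : G, ((MulAut.toPerm G).comp MulAut.conj) g x = g * x * g⁻¹ :=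
    fun g x => rfl
  simp only [hap, classAvg_pair, one_mul] at key
  exact key

theorem qr_triple {G : Type*} [Group G] [Fintype G] {D : ℕ} (hD : 0 < D)
    (hQR : IsQuasiRandomFin G D) (F f₂ f₃ : G → ℂ)
    (hF : ∀ x, ‖F x‖ ≤ 2) (hF0 : ∑ x, F x = 0)
    (hb₂ : ∀ x, ‖f₂ x‖ ≤ 1) (hb₃ : ∀ x, ‖f₃ x‖ ≤ 1) :
    ((Fintype.card G : ℝ)⁻¹ * ∑ g : G,
      ‖(Fintype.card G : ℂ)⁻¹ * ∑ x : G, F x * f₂ (g * x) * f₃ (x * g)‖) ^ 2 ≤ 8 / √D := by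
  set N : ℝ := ((Fintype.card G : ℕ) : ℝ) with hNdef
  have hN : 0 < N := by simp [hNdef, Fintype.card_pos]
  let P : G → G → ℂ := fun k z => F z * (starRingEnd ℂ) (F (z * k⁻¹))
  let Q : G → G → ℂ := fun k z => f₂ z * (starRingEnd ℂ) (f₂ (k * z * k⁻¹))
  have hP : ∀ k z, ‖P k z‖ ≤ 4 := by
    intro k z
    simp only [P, norm_mul, RCLike.norm_conj]
    nlinarith [hF z, hF (z * k⁻¹), norm_nonneg (F z), norm_nonneg (F (z * k⁻¹))]
  have hQ : ∀ k z, ‖Q k z‖ ≤ 1 := by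
    intro k z
    simp only [Q, norm_mul, RCLike.norm_conj]
    exact mul_le_one₀ (hb₂ _) (norm_nonneg _) (hb₂ _)
  -- averages of `P k`
  have hPavg : N⁻¹ * ∑ k, ‖(Fintype.card G : ℂ)⁻¹ * ∑ z, P k z‖ ≤ 4 / √D := by
    have key := qr_left hD hQR (fun y => (starRingEnd ℂ) (F y⁻¹)) (fun y => F y⁻¹) 2 2
      zero_le_two zero_le_two (fun x => by simpa using hF x⁻¹) (fun x => hF x⁻¹)
    have h0 : ∑ y : G, F y⁻¹ = 0 := by
      rw [← hF0]; exact Fintype.sum_equiv (Equiv.inv G) _ _ fun h => rfl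
    have h1 : ∀ k, ∑ x : G, (starRingEnd ℂ) (F (k * x)⁻¹) * F x⁻¹ = ∑ z, P k z := by
      intro k
      refine Fintype.sum_equiv (Equiv.inv G) _ _ fun x => ?_
      simp [P, mul_comm]
    simp only [h0, h1, mul_zero, sub_zero] at key
    norm_num at key ⊢
    exact key
  have hk : ∀ k, N⁻¹ * ∑ g, ‖(Fintype.card G : ℂ)⁻¹ * ∑ z, Q k (g * z) * P k z‖
      ≤ 4 / √D + ‖(Fintype.card G : ℂ)⁻¹ * ∑ z, P k z‖ := by
    intro k
    have key := qr_left hD hQR (Q k) (P k) 1 4 zero_le_one (by norm_num) (hQ k) (hP k)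
    rw [one_mul] at key
    have hq := avg_norm_le (Q k) 1 (hQ k)
    set p := (Fintype.card G : ℂ)⁻¹ * ∑ z, P k z
    set q := (Fintype.card G : ℂ)⁻¹ * ∑ z, Q k z
    calc N⁻¹ * ∑ g, ‖(Fintype.card G : ℂ)⁻¹ * ∑ z, Q k (g * z) * P k z‖
        ≤ N⁻¹ * ∑ g : G, (‖(Fintype.card G : ℂ)⁻¹ * ∑ z, Q k (g * z) * P k z - q * p‖ + ‖p‖) := by
          gcongr with g
          have h1 : ‖q * p‖ ≤ ‖p‖ := by
            rw [norm_mul]; exact mul_le_of_le_one_left (norm_nonneg _) hq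
          have h2 := norm_add_le ((Fintype.card G : ℂ)⁻¹ * ∑ z, Q k (g * z) * P k z - q * p) (q * p)
          rw [sub_add_cancel] at h2
          linarith
      _ = N⁻¹ * ∑ g : G, ‖(Fintype.card G : ℂ)⁻¹ * ∑ z, Q k (g * z) * P k z - q * p‖ + ‖p‖ := by
          rw [Finset.sum_add_distrib, mul_add]
          congr 1
          simp only [Finset.sum_const, Finset.card_univ, nsmul_eq_mul]
          rw [← hNdef]
          field_simp
      _ ≤ _ := by gcongr
  have hQP : N⁻¹ * ∑ k, (N⁻¹ * ∑ g, ‖(Fintype.card G : ℂ)⁻¹ * ∑ z, Q k (g * z) * P k z‖)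
      ≤ 8 / √D := by
    calc _ ≤ N⁻¹ * ∑ k, (4 / √D + ‖(Fintype.card G : ℂ)⁻¹ * ∑ z, P k z‖) := by
          gcongr with k; exact hk k
      _ = 4 / √D + N⁻¹ * ∑ k, ‖(Fintype.card G : ℂ)⁻¹ * ∑ z, P k z‖ := by
          rw [Finset.sum_add_distrib, mul_add]
          congr 1
          simp only [Finset.sum_const, Finset.card_univ, nsmul_eq_mul]
          rw [← hNdef]
          field_simp
      _ ≤ 4 / √D + 4 / √D := by gcongr
      _ = _ := by ring
  -- van der Corput
  let v : G → G → ℂ := fun g y => F (y * g⁻¹) * f₂ (g * y * g⁻¹)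
  have hvdc := vdc_ineq v f₃ hb₃
  have hv1 : ∀ g, ∑ y, v g y * f₃ y = ∑ x : G, F x * f₂ (g * x) * f₃ (x * g) := by
    intro g
    refine Fintype.sum_equiv (Equiv.mulRight g⁻¹) _ _ fun y => ?_
    simp [v, mul_assoc]
  have hv2 : ∀ k g, ∑ y, v g y * (starRingEnd ℂ) (v (k * g) y) = ∑ z, Q k (g * z) * P k z := by
    intro k g
    refine Fintype.sum_equiv (Equiv.mulRight g⁻¹) _ _ fun y => ?_
    simp only [v, P, Q, Equiv.coe_mulRight, map_mul, mul_inv_rev, mul_assoc]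
    ring
  have hv3 : ∑ g, ∑ h, ‖∑ y, v g y * (starRingEnd ℂ) (v h y)‖
      = ∑ k, ∑ g, ‖∑ z, Q k (g * z) * P k z‖ := by
    rw [Finset.sum_comm (γ := G) (f := fun k g => ‖∑ z, Q k (g * z) * P k z‖)]
    refine Finset.sum_congr rfl fun g _ => ?_
    refine (Fintype.sum_equiv (Equiv.mulRight g) _ _ fun k => ?_).symm
    rw [Equiv.coe_mulRight, hv2]
  simp only [hv1] at hvdc
  rw [hv3] at hvdc
  have hn : ∀ w : ℂ, ‖(Fintype.card G : ℂ)⁻¹ * w‖ = N⁻¹ * ‖w‖ := fun w => by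
    rw [norm_mul, norm_inv, Complex.norm_natCast]
  simp only [hn, ← Finset.mul_sum] at hQP ⊢
  refine le_trans ?_ hQP
  rw [mul_pow, mul_pow]
  calc N⁻¹ ^ 2 * (N⁻¹ ^ 2 * (∑ g, ‖∑ x : G, F x * f₂ (g * x) * f₃ (x * g)‖) ^ 2)
      ≤ N⁻¹ ^ 2 * (N⁻¹ ^ 2 * (N * ∑ k, ∑ g, ‖∑ z, Q k (g * z) * P k z‖)) := by gcongr
    _ = _ := by field_simp

/-- **Quantitative equidistribution of quadruples in finite quasi-random groups.**
If `G` is a finite group all of whose nontrivial complex irreducible representations have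
dimension at least `D`, then for all `f₁, f₂, f₃ : G → 𝔻`,
`(1/|G|) Σ_g |(1/|G|) Σ_x f₁(x) f₂(gx) f₃(xg) − ((1/|G|) Σ_x f₁(x))·((1/|G|) Σ_x Ef₂(x)·Ef₃(x))|
  ≤ 4·D^{-1/8}`, where `Ef` denotes the average of `f` over conjugacy classes. -/
theorem quantitative_equidistribution_quadruples_finite
    {G : Type*} [Group G] [Fintype G]
    (D : ℕ) (hD : 0 < D) (hQR : IsQuasiRandomFin G D)
    (f₁ f₂ f₃ : G → ℂ)
    (hb₁ : ∀ x, ‖f₁ x‖ ≤ 1) (hb₂ : ∀ x, ‖f₂ x‖ ≤ 1) (hb₃ : ∀ x, ‖f₃ x‖ ≤ 1) :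
    (Fintype.card G : ℝ)⁻¹ * ∑ g : G,
      ‖(Fintype.card G : ℂ)⁻¹ * ∑ x : G, f₁ x * f₂ (g * x) * f₃ (x * g)
        - ((Fintype.card G : ℂ)⁻¹ * ∑ x : G, f₁ x) *
          ((Fintype.card G : ℂ)⁻¹ * ∑ x : G, classAvg f₂ x * classAvg f₃ x)‖
      ≤ 4 * (D : ℝ) ^ (-(1 / 8 : ℝ)) := by
  set N : ℝ := ((Fintype.card G : ℕ) : ℝ) with hNdef
  have hN : 0 < N := by simp [hNdef, Fintype.card_pos]
  have hNC : (Fintype.card G : ℂ) ≠ 0 := by simp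
  set m : ℂ := (Fintype.card G : ℂ)⁻¹ * ∑ x : G, f₁ x with hm
  set c : ℂ := (Fintype.card G : ℂ)⁻¹ * ∑ x : G, classAvg f₂ x * classAvg f₃ x with hc
  have hm1 : ‖m‖ ≤ 1 := avg_norm_le f₁ 1 hb₁
  have hF : ∀ x, ‖f₁ x - m‖ ≤ 2 := fun x => by
    have := norm_sub_le (f₁ x) m
    linarith [hb₁ x]
  have hF0 : ∑ x, (f₁ x - m) = 0 := by
    rw [Finset.sum_sub_distrib]
    simp only [Finset.sum_const, Finset.card_univ, nsmul_eq_mul, hm]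
    rw [mul_inv_cancel_left₀ hNC, sub_self]
  have h1 := qr_triple hD hQR (fun x => f₁ x - m) f₂ f₃ hF hF0 hb₂ hb₃
  have h2 := qr_conj hD hQR f₂ f₃ hb₂ hb₃
  have hterm : ∀ g : G, (Fintype.card G : ℂ)⁻¹ * ∑ x : G, f₁ x * f₂ (g * x) * f₃ (x * g) - m * c
      = (Fintype.card G : ℂ)⁻¹ * ∑ x : G, (f₁ x - m) * f₂ (g * x) * f₃ (x * g)
        + m * ((Fintype.card G : ℂ)⁻¹ * ∑ x, f₂ (g * x * g⁻¹) * f₃ x - c) := by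
    intro g
    have e1 : ∑ x, f₂ (g * x * g⁻¹) * f₃ x = ∑ x, f₂ (g * x) * f₃ (x * g) := by
      refine Fintype.sum_equiv (Equiv.mulRight g⁻¹) _ _ fun y => ?_
      simp [mul_assoc]
    have e2 : ∑ x : G, (f₁ x - m) * f₂ (g * x) * f₃ (x * g)
        = ∑ x : G, f₁ x * f₂ (g * x) * f₃ (x * g) - m * ∑ x, f₂ (g * x) * f₃ (x * g) := by
      rw [Finset.mul_sum, ← Finset.sum_sub_distrib]
      refine Finset.sum_congr rfl fun x _ => ?_
      ring
    rw [e1, e2]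
    ring
  set A := N⁻¹ * ∑ g : G,
      ‖(Fintype.card G : ℂ)⁻¹ * ∑ x : G, (f₁ x - m) * f₂ (g * x) * f₃ (x * g)‖ with hA
  set B := N⁻¹ * ∑ g : G, ‖(Fintype.card G : ℂ)⁻¹ * ∑ x, f₂ (g * x * g⁻¹) * f₃ x - c‖ with hB
  have hAB : N⁻¹ * ∑ g : G,
      ‖(Fintype.card G : ℂ)⁻¹ * ∑ x : G, f₁ x * f₂ (g * x) * f₃ (x * g) - m * c‖ ≤ A + B := by
    rw [hA, hB, ← mul_add, ← Finset.sum_add_distrib]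
    gcongr with g
    rw [hterm g]
    refine (norm_add_le _ _).trans ?_
    gcongr
    rw [norm_mul]
    exact mul_le_of_le_one_left (norm_nonneg _) hm1
  refine hAB.trans ?_
  have hDr : (1 : ℝ) ≤ D := by exact_mod_cast hD
  set t : ℝ := (D : ℝ) ^ (-(1 / 8 : ℝ)) with ht
  have ht0 : 0 < t := Real.rpow_pos_of_pos (by linarith) _
  have ht1 : t ≤ 1 := Real.rpow_le_one_of_one_le_of_nonpos hDr (by norm_num)
  have ht4 : 1 / √(D : ℝ) = t ^ 4 := by
    rw [ht, ← Real.rpow_natCast, ← Real.rpow_mul (by linarith), Real.sqrt_eq_rpow,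
      one_div, ← Real.rpow_neg (by linarith)]
    norm_num
  have h8 : 8 / √(D : ℝ) = 8 * t ^ 4 := by rw [← ht4]; ring
  rw [h8] at h1
  rw [ht4] at h2
  have hA3 : A ≤ 3 * t ^ 2 := by
    refine (abs_le_of_sq_le_sq' ?_ (by positivity)).2
    refine h1.trans ?_
    nlinarith [pow_pos ht0 4]
  have ht2 : t ^ 2 ≤ t := by nlinarith
  have ht4' : t ^ 4 ≤ t := by nlinarith [sq_nonneg t]
  linarith
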